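/- Let Ω ⊆ ℝ^d be a bounded open set equipped with a Gauss–Green partition K_1, …, K_M with boundary measures σ_j and outward unit normals n_j. Let L : ℝ^d × ℝ × ℝ^d → ℝ be twice continuously differentiable, let U : cl(Ω) → ℝ be continuous with U restricted to each K_j extending to C²(cl(K_j)), let W : cl(Ω) → ℝ be continuous with W restricted to each K_j extending to C¹(cl(K_j)), and let ξ ∈ C¹(cl(Ω); ℝ^d), φ ∈ C¹(cl(Ω)). Assume: (i) (invariance of the Lagrangian) the infinitesimal invariance identity ∇Q_U · L_p(·,U,∇U) + Q_U L_u(·,U,∇U) + div(L(·,U,∇U) ξ) = 0, with Q_U := φ − ξ·∇U, holds at every point of each K_j; and (ii) the discrete Euler–Lagrange identity Σ_j ∫_{K_j} ( −div(L_p(·,U,∇U)) + L_u(·,U,∇U) ) W dx + Σ_j ∫_{∂K_j} ( L_p(·,U,∇U) · n_j ) W dσ_j = 0 holds. Then the discrete Noether conservation law holds: 0 = Σ_j ∫_{K_j} ( −div(L_p(·,U,∇U)) + L_u(·,U,∇U) ) (φ − W) dx + Σ_j ∫_{∂K_j} ( L_p(·,U,∇U) · n_j )(φ − W) dσ_j +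 Σ_j ∫_{∂K_j} L(·,U,∇U) ξ · n_j dσ_j − Σ_j ∫_{K_j} [ L_p(·,U,∇U) · ∇(ξ·∇U) + (ξ·∇U) L_u(·,U,∇U) ] dx. -/

import Mathlib

open MeasureTheory RealInnerProductSpace
open scoped BigOperators

noncomputable section

/-- `ℝ^d` as a Euclidean (inner product) space. -/
abbrev Euc (d : ℕ) := EuclideanSpace ℝ (Fin d)

/-- Divergence of a vector field on `ℝ^d`. -/
noncomputable def pdiv {d : ℕ} (F : Euc d → Euc d) (x : Euc d) : ℝ :=
  ∑ i, fderiv ℝ F x (EuclideanSpace.single i 1) i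

/-- `x ↦ L(x, u(x), ∇u(x))`, the Lagrangian evaluated along `u`. -/
noncomputable def lagAlong {d : ℕ} (L : Euc d → ℝ → Euc d → ℝ) (u : Euc d → ℝ)
    (x : Euc d) : ℝ :=
  L x (u x) (gradient u x)

/-- `L_u(x, u(x), ∇u(x))`, the partial derivative of `L` in its second argument
evaluated along `u`. -/
noncomputable def lagU {d : ℕ} (L : Euc d → ℝ → Euc d → ℝ) (u : Euc d → ℝ)
    (x : Euc d) : ℝ :=
  deriv (fun s => L x s (gradient u x)) (u x)

/-- `L_p(x, u(x), ∇u(x))`, the gradient of `L` in its third argument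
evaluated along `u`. -/
noncomputable def lagP {d : ℕ} (L : Euc d → ℝ → Euc d → ℝ) (u : Euc d → ℝ)
    (x : Euc d) : Euc d :=
  gradient (fun p => L x (u x) p) (gradient u x)

/-- A Gauss–Green partition of a bounded open set `Ω ⊆ ℝ^d`: finitely many pairwise
disjoint open pieces whose closures cover `cl(Ω)`, each equipped with a finite Borel
boundary measure `σ i` supported on `∂(piece i)` and an outward unit normal field,
such that the Gauss–Green (divergence) theorem holds on each piece for `C¹` vector
fields. -/
structure GGPartition (d : ℕ) (Ω : Set (Euc d)) (N : ℕ) where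
  piece : Fin N → Set (Euc d)
  isOpen_piece : ∀ i, IsOpen (piece i)
  disjoint_piece : ∀ i j, i ≠ j → Disjoint (piece i) (piece j)
  cover : (⋃ i, closure (piece i)) = closure Ω
  σ : Fin N → Measure (Euc d)
  σ_finite : ∀ i, IsFiniteMeasure (σ i)
  σ_support : ∀ i, σ i ((frontier (piece i))ᶜ) = 0
  normal : Fin N → Euc d → Euc d
  normal_meas : ∀ i, Measurable (normal i)
  normal_bdd : ∀ i x, ‖normal i x‖ ≤ 1
  normal_unit : ∀ i, ∀ x ∈ frontier (piece i), ‖normal i x‖ = 1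
  gauss_green : ∀ i (F : Euc d → Euc d), ContDiff ℝ 1 F →
    ∫ x in piece i, pdiv F x = ∫ x, ⟪F x, normal i x⟫ ∂(σ i)


lemma dn_contDiff_gradient {d : ℕ} {u : Euc d → ℝ} (hu : ContDiff ℝ 2 u) :
    ContDiff ℝ 1 (gradient u) := by
  have h : ContDiff ℝ 1 (fderiv ℝ u) := hu.fderiv_right (by norm_num)
  exact ((InnerProductSpace.toDual ℝ (Euc d)).symm.toContinuousLinearEquiv.contDiff).comp h

lemma dn_continuous_gradient {d : ℕ} {u : Euc d → ℝ} (hu : ContDiff ℝ 1 u) :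
    Continuous (gradient u) := by
  have h : Continuous (fderiv ℝ u) := hu.continuous_fderiv (by norm_num)
  exact (InnerProductSpace.toDual ℝ (Euc d)).symm.continuous.comp h

lemma dn_contDiff_jet {d : ℕ} {u : Euc d → ℝ} (hu : ContDiff ℝ 2 u) :
    ContDiff ℝ 1 (fun x => ((x, u x, gradient u x) : Euc d × ℝ × Euc d)) :=
  contDiff_id.prodMk ((hu.of_le (by norm_num)).prodMk (dn_contDiff_gradient hu))

lemma dn_contDiff_lagAlong {d : ℕ} {L : Euc d → ℝ → Euc d → ℝ}
    (hL : ContDiff ℝ 2 (fun q : Euc d × ℝ × Euc d => L q.1 q.2.1 q.2.2))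
    {u : Euc d → ℝ} (hu : ContDiff ℝ 2 u) : ContDiff ℝ 1 (lagAlong L u) :=
  (hL.of_le (by norm_num)).comp (dn_contDiff_jet hu)

lemma dn_continuous_lagU {d : ℕ} {L : Euc d → ℝ → Euc d → ℝ}
    (hL : ContDiff ℝ 2 (fun q : Euc d × ℝ × Euc d => L q.1 q.2.1 q.2.2))
    {u : Euc d → ℝ} (hu : ContDiff ℝ 2 u) : Continuous (lagU L u) := by
  have h : lagU L u = fun x =>
      fderiv ℝ (fun q : Euc d × ℝ × Euc d => L q.1 q.2.1 q.2.2) (x, u x, gradient u x)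
        ((0 : Euc d), (1 : ℝ), (0 : Euc d)) := by
    funext x
    have h1 : HasDerivAt (fun s : ℝ => ((x, s, gradient u x) : Euc d × ℝ × Euc d))
        ((0 : Euc d), (1 : ℝ), (0 : Euc d)) (u x) :=
      (hasDerivAt_const _ _).prodMk ((hasDerivAt_id _).prodMk (hasDerivAt_const _ _))
    have h2 := ((hL.differentiable (by norm_num)) (x, u x, gradient u x)).hasFDerivAt
    exact (h2.comp_hasDerivAt (u x) h1).deriv
  rw [h]
  exact ((hL.continuous_fderiv (by norm_num)).comp (dn_contDiff_jet hu).continuous).clm_apply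
    continuous_const

lemma dn_contDiff_lagP {d : ℕ} {L : Euc d → ℝ → Euc d → ℝ}
    (hL : ContDiff ℝ 2 (fun q : Euc d × ℝ × Euc d => L q.1 q.2.1 q.2.2))
    {u : Euc d → ℝ} (hu : ContDiff ℝ 2 u) : ContDiff ℝ 1 (lagP L u) := by
  have h : lagP L u = fun x => (InnerProductSpace.toDual ℝ (Euc d)).symm
      ((fderiv ℝ (fun q : Euc d × ℝ × Euc d => L q.1 q.2.1 q.2.2) (x, u x, gradient u x)).comp
        ((0 : Euc d →L[ℝ] Euc d).prod
          ((0 : Euc d →L[ℝ] ℝ).prod (ContinuousLinearMap.id ℝ (Euc d))))) := by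
    funext x
    have h1 : HasFDerivAt (fun p : Euc d => ((x, u x, p) : Euc d × ℝ × Euc d))
        ((0 : Euc d →L[ℝ] Euc d).prod
          ((0 : Euc d →L[ℝ] ℝ).prod (ContinuousLinearMap.id ℝ (Euc d)))) (gradient u x) :=
      (hasFDerivAt_const _ _).prodMk ((hasFDerivAt_const _ _).prodMk (hasFDerivAt_id _))
    have h2 := ((hL.differentiable (by norm_num)) (x, u x, gradient u x)).hasFDerivAt
    have h3 := (h2.comp (gradient u x) h1).fderiv
    unfold lagP
    rw [gradient]
    exact congrArg _ h3
  rw [h]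
  have h4 : ContDiff ℝ 1 (fun x =>
      fderiv ℝ (fun q : Euc d × ℝ × Euc d => L q.1 q.2.1 q.2.2) (x, u x, gradient u x)) :=
    (hL.fderiv_right (m := 1) (by norm_num)).comp (dn_contDiff_jet hu)
  exact ((InnerProductSpace.toDual ℝ (Euc d)).symm.toContinuousLinearEquiv.contDiff).comp
    (h4.clm_comp contDiff_const)

lemma dn_continuous_pdiv {d : ℕ} {F : Euc d → Euc d} (hF : ContDiff ℝ 1 F) :
    Continuous (pdiv F) := by
  unfold pdiv
  refine continuous_finset_sum _ fun i _ => ?_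
  have h := (hF.continuous_fderiv (by norm_num)).clm_apply
    (continuous_const (y := (EuclideanSpace.single i 1 : Euc d)))
  exact (EuclideanSpace.proj (𝕜 := ℝ) i).continuous.comp h

lemma dn_pdiv_smul {d : ℕ} {F : Euc d → Euc d} {f : Euc d → ℝ} (hF : ContDiff ℝ 1 F)
    (hf : ContDiff ℝ 1 f) (x : Euc d) :
    pdiv (fun y => f y • F y) x = f x * pdiv F x + ⟪gradient f x, F x⟫ := by
  have h := (((hf.differentiable (by norm_num)) x).hasFDerivAt.smul
    ((hF.differentiable (by norm_num)) x).hasFDerivAt).fderiv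
  have h0 : fderiv ℝ (fun y => f y • F y) x = _ := h
  have hg : ∀ i, fderiv ℝ f x (EuclideanSpace.single i 1) = gradient f x i := by
    intro i
    have := InnerProductSpace.toDual_symm_apply (𝕜 := ℝ) (x := (EuclideanSpace.single i 1 : Euc d))
      (y := fderiv ℝ f x)
    rw [← this, EuclideanSpace.inner_single_right]
    simp [gradient]
  unfold pdiv
  rw [h0]
  simp only [ContinuousLinearMap.add_apply, ContinuousLinearMap.smul_apply,
    ContinuousLinearMap.smulRight_apply, PiLp.add_apply, PiLp.smul_apply, smul_eq_mul, hg,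
    Finset.sum_add_distrib, Finset.mul_sum, PiLp.inner_apply]
  congr 1
  refine Finset.sum_congr rfl fun i _ => ?_
  simp [mul_comm]

lemma dn_gradient_sub {d : ℕ} {f g : Euc d → ℝ} (hf : ContDiff ℝ 1 f)
    (hg : ContDiff ℝ 1 g) (x : Euc d) :
    gradient (fun y => f y - g y) x = gradient f x - gradient g x := by
  unfold gradient
  rw [← map_sub]
  exact congrArg _ (fderiv_sub ((hf.differentiable (by norm_num)) x)
    ((hg.differentiable (by norm_num)) x))

lemma dn_compact {d N : ℕ} {Ω : Set (Euc d)} (hΩb : Bornology.IsBounded Ω)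
    (T : GGPartition d Ω N) (j : Fin N) : IsCompact (closure (T.piece j)) := by
  refine Metric.isCompact_of_isClosed_isBounded isClosed_closure ?_
  refine hΩb.closure.subset ?_
  rw [← T.cover]
  exact Set.subset_iUnion (fun i => closure (T.piece i)) j

lemma dn_intOn {d N : ℕ} {Ω : Set (Euc d)} (hΩb : Bornology.IsBounded Ω)
    (T : GGPartition d Ω N) (j : Fin N) {f : Euc d → ℝ} (hf : Continuous f) :
    Integrable f (volume.restrict (T.piece j)) :=
  (hf.continuousOn.integrableOn_compact (dn_compact hΩb T j)).mono_set subset_closure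

lemma dn_intσ {d N : ℕ} {Ω : Set (Euc d)} (hΩb : Bornology.IsBounded Ω)
    (T : GGPartition d Ω N) (j : Fin N) {F : Euc d → Euc d} {f : Euc d → ℝ}
    (hF : Continuous F) (hf : Continuous f) :
    Integrable (fun x => ⟪F x, T.normal j x⟫ * f x) (T.σ j) := by
  haveI := T.σ_finite j
  have hr : (T.σ j).restrict (closure (T.piece j)) = T.σ j := by
    apply Measure.restrict_eq_self_of_ae_mem
    have : ∀ᵐ x ∂(T.σ j), x ∈ frontier (T.piece j) := T.σ_support j
    filter_upwards [this] with x hx using frontier_subset_closure hx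
  have h1 : Integrable (fun x => ‖F x‖ * |f x|) (T.σ j) := by
    rw [← hr]
    exact (hF.norm.mul hf.abs).continuousOn.integrableOn_compact (dn_compact hΩb T j)
  refine h1.mono' ?_ (Filter.Eventually.of_forall fun x => ?_)
  · exact ((hF.measurable.inner (T.normal_meas j)).mul hf.measurable).aestronglyMeasurable
  · rw [norm_mul, Real.norm_eq_abs (f x)]
    refine mul_le_mul_of_nonneg_right ?_ (abs_nonneg _)
    calc ‖⟪F x, T.normal j x⟫‖ ≤ ‖F x‖ * ‖T.normal j x‖ := norm_inner_le_norm _ _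
      _ ≤ ‖F x‖ * 1 := mul_le_mul_of_nonneg_left (T.normal_bdd j x) (norm_nonneg _)
      _ = ‖F x‖ := mul_one _

/-- discrete Noether conservation law over `C⁰` finite element
spaces: if the Lagrangian is infinitesimally invariant along the piecewise-`C²`
finite element function `U` on each element, and the discrete Euler–Lagrange
identity holds when tested with the continuous piecewise-`C¹` function `W`, then
the discrete Noether conservation law holds. -/
theorem discrete_noether_conservation {d M : ℕ} (Ω : Set (Euc d))
    (hΩo : IsOpen Ω) (hΩb : Bornology.IsBounded Ω)
    (T : GGPartition d Ω M)
    (L : Euc d → ℝ → Euc d → ℝ)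
    (hL : ContDiff ℝ 2 (fun q : Euc d × ℝ × Euc d => L q.1 q.2.1 q.2.2))
    (U : Euc d → ℝ) (hU : ContinuousOn U (closure Ω))
    (Uext : Fin M → Euc d → ℝ) (hUext : ∀ j, ContDiff ℝ 2 (Uext j))
    (hUagree : ∀ j, ∀ x ∈ T.piece j, U x = Uext j x)
    (W : Euc d → ℝ) (hW : ContinuousOn W (closure Ω))
    (Wext : Fin M → Euc d → ℝ) (hWext : ∀ j, ContDiff ℝ 1 (Wext j))
    (hWagree : ∀ j, ∀ x ∈ T.piece j, W x = Wext j x)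
    (ξ : Euc d → Euc d) (hξ : ContDiff ℝ 1 ξ)
    (φ : Euc d → ℝ) (hφ : ContDiff ℝ 1 φ)
    (hinv : ∀ j, ∀ x ∈ T.piece j,
      ⟪gradient (fun y => φ y - ⟪ξ y, gradient (Uext j) y⟫) x, lagP L (Uext j) x⟫
        + (φ x - ⟪ξ x, gradient (Uext j) x⟫) * lagU L (Uext j) x
        + pdiv (fun y => lagAlong L (Uext j) y • ξ y) x = 0)
    (hdEL : (∑ j, ∫ x in T.piece j,
          (-(pdiv (lagP L (Uext j)) x) + lagU L (Uext j) x) * Wext j x)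
      + (∑ j, ∫ x, ⟪lagP L (Uext j) x, T.normal j x⟫ * Wext j x ∂(T.σ j)) = 0) :
    0 = (∑ j, ∫ x in T.piece j,
          (-(pdiv (lagP L (Uext j)) x) + lagU L (Uext j) x) * (φ x - Wext j x))
      + (∑ j, ∫ x, ⟪lagP L (Uext j) x, T.normal j x⟫ * (φ x - Wext j x) ∂(T.σ j))
      + (∑ j, ∫ x, lagAlong L (Uext j) x * ⟪ξ x, T.normal j x⟫ ∂(T.σ j))
      - ∑ j, ∫ x in T.piece j,
          (⟪lagP L (Uext j) x, gradient (fun y => ⟪ξ y, gradient (Uext j) y⟫) x⟫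
            + ⟪ξ x, gradient (Uext j) x⟫ * lagU L (Uext j) x) := by
  have key : ∀ j, (∫ x in T.piece j,
          (-(pdiv (lagP L (Uext j)) x) + lagU L (Uext j) x) * (φ x - Wext j x))
      + (∫ x, ⟪lagP L (Uext j) x, T.normal j x⟫ * (φ x - Wext j x) ∂(T.σ j))
      + (∫ x, lagAlong L (Uext j) x * ⟪ξ x, T.normal j x⟫ ∂(T.σ j))
      - (∫ x in T.piece j,
          (⟪lagP L (Uext j) x, gradient (fun y => ⟪ξ y, gradient (Uext j) y⟫) x⟫
            + ⟪ξ x, gradient (Uext j) x⟫ * lagU L (Uext j) x))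
      = -((∫ x in T.piece j,
          (-(pdiv (lagP L (Uext j)) x) + lagU L (Uext j) x) * Wext j x)
      + (∫ x, ⟪lagP L (Uext j) x, T.normal j x⟫ * Wext j x ∂(T.σ j))) := by
    intro j
    have hP := dn_contDiff_lagP hL (hUext j)
    have hLu := dn_continuous_lagU hL (hUext j)
    have hA := dn_contDiff_lagAlong hL (hUext j)
    have hq : ContDiff ℝ 1 (fun y => ⟪ξ y, gradient (Uext j) y⟫) :=
      hξ.inner ℝ (dn_contDiff_gradient (hUext j))
    have hE : Continuous (fun x => -(pdiv (lagP L (Uext j)) x) + lagU L (Uext j) x) :=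
      (dn_continuous_pdiv hP).neg.add hLu
    have hφP : ContDiff ℝ 1 (fun y => φ y • lagP L (Uext j) y) := hφ.smul hP
    have hAξ : ContDiff ℝ 1 (fun y => lagAlong L (Uext j) y • ξ y) := hA.smul hξ
    have g1 := T.gauss_green j _ hφP
    have g2 := T.gauss_green j _ hAξ
    simp only [real_inner_smul_left] at g1 g2
    simp only [mul_sub]
    have i1 : Integrable (fun x => (-(pdiv (lagP L (Uext j)) x) + lagU L (Uext j) x) * φ x)
        (volume.restrict (T.piece j)) := dn_intOn hΩb T j (hE.mul hφ.continuous)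
    have i0 : Integrable (fun x => (-(pdiv (lagP L (Uext j)) x) + lagU L (Uext j) x) * Wext j x)
        (volume.restrict (T.piece j)) := dn_intOn hΩb T j (hE.mul (hWext j).continuous)
    rw [integral_sub i1 i0,
      integral_sub (dn_intσ hΩb T j hP.continuous hφ.continuous)
        (dn_intσ hΩb T j hP.continuous (hWext j).continuous), ← g2]
    have g3 : ∫ x, ⟪lagP L (Uext j) x, T.normal j x⟫ * φ x ∂(T.σ j)
        = ∫ x in T.piece j, pdiv (fun y => φ y • lagP L (Uext j) y) x := by
      rw [g1]; simp only [mul_comm]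
    have hR : Continuous (fun x =>
        ⟪lagP L (Uext j) x, gradient (fun y => ⟪ξ y, gradient (Uext j) y⟫) x⟫
            + ⟪ξ x, gradient (Uext j) x⟫ * lagU L (Uext j) x) :=
      (hP.continuous.inner (dn_continuous_gradient hq)).add (hq.continuous.mul hLu)
    have i2 := dn_intOn hΩb T j (dn_continuous_pdiv hφP)
    have i3 := dn_intOn hΩb T j (dn_continuous_pdiv hAξ)
    have i4 := dn_intOn hΩb T j hR
    have e : ∫ x in T.piece j,
        ((-(pdiv (lagP L (Uext j)) x) + lagU L (Uext j) x) * φ x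
        + pdiv (fun y => φ y • lagP L (Uext j) y) x
        + pdiv (fun y => lagAlong L (Uext j) y • ξ y) x
        - (⟪lagP L (Uext j) x, gradient (fun y => ⟪ξ y, gradient (Uext j) y⟫) x⟫
            + ⟪ξ x, gradient (Uext j) x⟫ * lagU L (Uext j) x)) = 0 := by
      apply setIntegral_eq_zero_of_forall_eq_zero
      intro x hx
      have h := hinv j x hx
      rw [dn_gradient_sub hφ hq, inner_sub_left] at h
      rw [dn_pdiv_smul hP hφ, real_inner_comm (gradient _ x) (lagP L (Uext j) x)]
      linarith
    have i12 : Integrable (fun x => (-(pdiv (lagP L (Uext j)) x) + lagU L (Uext j) x) * φ x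
        + pdiv (fun y => φ y • lagP L (Uext j) y) x) (volume.restrict (T.piece j)) := i1.add i2
    have i123 : Integrable (fun x => (-(pdiv (lagP L (Uext j)) x) + lagU L (Uext j) x) * φ x
        + pdiv (fun y => φ y • lagP L (Uext j) y) x
        + pdiv (fun y => lagAlong L (Uext j) y • ξ y) x) (volume.restrict (T.piece j)) :=
      i12.add i3
    rw [integral_sub i123 i4, integral_add i12 i3, integral_add i1 i2] at e
    rw [g3]
    linarith
  have hs := Finset.sum_congr (rfl : (Finset.univ : Finset (Fin M)) = Finset.univ)
    (fun j _ => key j)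
  rw [Finset.sum_sub_distrib, Finset.sum_add_distrib, Finset.sum_add_distrib,
    Finset.sum_neg_distrib, Finset.sum_add_distrib, hdEL, neg_zero] at hs
  exact hs.symm
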